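/- arXiv:2003.06536 — 3 statements merged into one kernel-verified Lean document; each statement's English description precedes it below -/
import Mathlib

section
/- Let σ₁,…,σ_k be distinct complex numbers, π₁,…,π_q be distinct complex numbers, let h_{ij} ∈ ℂ for 1 ≤ i ≤ k, 1 ≤ j ≤ q be data values, and let α_{ij} ∈ ℂ with α_{i₀j₀} ≠ 0 for a fixed pair (i₀, j₀). Set β_{ij} = h_{ij}·α_{ij} for all i, j, and let H̃(s,p) = (Σ_{i=1}^k Σ_{j=1}^q β_{ij}/((s−σ_i)(p−π_j))) / (Σ_{i=1}^k Σ_{j=1}^q α_{ij}/((s−σ_i)(p−π_j))). Then H̃(s,p) tends to h_{i₀j₀} as (s,p) tends to (σ_{i₀}, π_{j₀}) within the set of pairs (s,p) with s ≠ σ_i for all i and p ≠ π_j for all j. That is, the two-variable barycentric form interpolates the data value h_{i₀j₀} at the support pair (σ_{i₀}, π_{j₀}). -/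
open Filter Topology

/-!
Multiplying numerator and denominator by `(s - σ i₀) * (p - π j₀)` leaves the quotient unchanged and
cancels the pole of the `(i₀, j₀)` terms, while every other term acquires a factor tending to `0`.
Numerator and denominator thus tend to `β i₀ j₀` and `α i₀ j₀`. The double sum is treated one
variable at a time: the inner sum, once its pole is cancelled, is a convergent weight for the outer
one.
-/

section TopologicalField

variable {ι κ K X : Type*} [Fintype ι] [Fintype κ]
  [Field K] [TopologicalSpace K]

theorem tendsto_sub_mul_div_sub_self {l : Filter X} {f c : X → K} {a C : K}
    (hf : ∀ᶠ x in l, f x ≠ a) (hc : Tendsto c l (𝓝 C)) :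
    Tendsto (fun x => (f x - a) * (c x / (f x - a))) l (𝓝 C) := by
  refine hc.congr' ?_
  filter_upwards [hf] with x hx
  exact (mul_div_cancel₀ (c x) (sub_ne_zero.2 hx)).symm

variable [IsTopologicalDivisionRing K]

theorem tendsto_sub_mul_div_sub_of_ne {l : Filter X} {f c : X → K} {a b C : K} (hab : a ≠ b)
    (hf : Tendsto f l (𝓝 a)) (hc : Tendsto c l (𝓝 C)) :
    Tendsto (fun x => (f x - a) * (c x / (f x - b))) l (𝓝 0) := by
  have hquot : Tendsto (fun x => c x / (f x - b)) l (𝓝 (C / (a - b))) :=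
    hc.div (hf.sub_const b) (sub_ne_zero.2 hab)
  simpa only [sub_self, zero_mul] using (hf.sub_const a).mul hquot

theorem tendsto_sub_mul_sum_div_sub {l : Filter X} {σ : ι → K} {i₀ : ι}
    (hσ : ∀ i ≠ i₀, σ i ≠ σ i₀) {f : X → K} (hf : Tendsto f l (𝓝[≠] σ i₀))
    {c : ι → X → K} {C : ι → K} (hc : ∀ i, Tendsto (c i) l (𝓝 (C i))) :
    Tendsto (fun x => (f x - σ i₀) * ∑ i, c i x / (f x - σ i)) l (𝓝 (C i₀)) := by
  classical
  obtain ⟨hf_lim, hf_ne⟩ := tendsto_nhdsWithin_iff.1 hf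
  have hterm (i : ι) : Tendsto (fun x => (f x - σ i₀) * (c i x / (f x - σ i))) l
      (𝓝 (if i = i₀ then C i else 0)) := by
    split_ifs with hi
    · subst hi
      exact tendsto_sub_mul_div_sub_self hf_ne (hc i)
    · exact tendsto_sub_mul_div_sub_of_ne (hσ i hi).symm hf_lim (hc i)
  simpa only [Finset.mul_sum, Finset.sum_ite_eq', Finset.mem_univ, if_true] using
    tendsto_finsetSum Finset.univ fun i _ => hterm i

theorem tendsto_sub_mul_sub_mul_sum_sum_div {σ : ι → K} {π : κ → K} {i₀ : ι} {j₀ : κ}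
    (hσ : ∀ i ≠ i₀, σ i ≠ σ i₀) (hπ : ∀ j ≠ j₀, π j ≠ π j₀) (c : ι → κ → K) :
    Tendsto (fun x : K × K =>
        ((x.1 - σ i₀) * (x.2 - π j₀)) * ∑ i, ∑ j, c i j / ((x.1 - σ i) * (x.2 - π j)))
      (𝓝[≠] σ i₀ ×ˢ 𝓝[≠] π j₀) (𝓝 (c i₀ j₀)) := by
  have hinner (i : ι) : Tendsto (fun x : K × K => (x.2 - π j₀) * ∑ j, c i j / (x.2 - π j))
      (𝓝[≠] σ i₀ ×ˢ 𝓝[≠] π j₀) (𝓝 (c i j₀)) :=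
    tendsto_sub_mul_sum_div_sub hπ tendsto_snd fun _ => tendsto_const_nhds
  refine (tendsto_sub_mul_sum_div_sub hσ tendsto_fst hinner).congr fun x => ?_
  simp only [Finset.mul_sum, Finset.sum_div]
  refine Finset.sum_congr rfl fun i _ => Finset.sum_congr rfl fun j _ => ?_
  rw [mul_div_assoc, div_div, mul_comm (x.2 - π j), mul_assoc]

theorem two_variable_barycentric_interpolation_general {σ : ι → K} {π : κ → K} {i₀ : ι} {j₀ : κ}
    (hσ : ∀ i ≠ i₀, σ i ≠ σ i₀) (hπ : ∀ j ≠ j₀, π j ≠ π j₀)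
    (α β : ι → κ → K) (hα : α i₀ j₀ ≠ 0) :
    Tendsto (fun x : K × K =>
        (∑ i, ∑ j, β i j / ((x.1 - σ i) * (x.2 - π j))) /
        (∑ i, ∑ j, α i j / ((x.1 - σ i) * (x.2 - π j))))
      (𝓝[≠] σ i₀ ×ˢ 𝓝[≠] π j₀) (𝓝 (β i₀ j₀ / α i₀ j₀)) := by
  refine ((tendsto_sub_mul_sub_mul_sum_sum_div hσ hπ β).div
    (tendsto_sub_mul_sub_mul_sum_sum_div hσ hπ α) hα).congr' ?_
  have hfst : ∀ᶠ s in 𝓝[≠] σ i₀, s ≠ σ i₀ := self_mem_nhdsWithin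
  have hsnd : ∀ᶠ p in 𝓝[≠] π j₀, p ≠ π j₀ := self_mem_nhdsWithin
  filter_upwards [hfst.prod_mk hsnd] with x ⟨hs, hp⟩
  exact mul_div_mul_left _ _ (mul_ne_zero (sub_ne_zero.2 hs) (sub_ne_zero.2 hp))

end TopologicalField

theorem nhdsWithin_forall_ne_prod_le {ι κ X Y : Type*} [TopologicalSpace X] [TopologicalSpace Y]
    (σ : ι → X) (π : κ → Y) (i₀ : ι) (j₀ : κ) :
    𝓝[{x : X × Y | (∀ i, x.1 ≠ σ i) ∧ ∀ j, x.2 ≠ π j}] (σ i₀, π j₀) ≤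
      𝓝[≠] σ i₀ ×ˢ 𝓝[≠] π j₀ := by
  rw [← nhdsWithin_prod_eq]
  exact nhdsWithin_mono _ fun _ hx => ⟨hx.1 i₀, hx.2 j₀⟩

/-- Corollary 3.1(a): With distinct support points `σ i` and `π j`,
data `h i j`, weights `α i j` with `α i₀ j₀ ≠ 0`, and the interpolatory choice
`β i j = h i j * α i j`, the two-variable barycentric form tends to `h i₀ j₀` as
`(s,p) → (σ i₀, π j₀)` within the pairs avoiding all support points; i.e. it
interpolates the data at the support pair `(σ i₀, π j₀)`. -/
theorem two_variable_barycentric_interpolation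
    (k q : ℕ) (σ : Fin k → ℂ) (π : Fin q → ℂ)
    (hσ : Function.Injective σ) (hπ : Function.Injective π)
    (h α β : Fin k → Fin q → ℂ)
    (hβ : ∀ i j, β i j = h i j * α i j)
    (i₀ : Fin k) (j₀ : Fin q) (hα : α i₀ j₀ ≠ 0) :
    Tendsto (fun x : ℂ × ℂ =>
        (∑ i, ∑ j, β i j / ((x.1 - σ i) * (x.2 - π j))) /
        (∑ i, ∑ j, α i j / ((x.1 - σ i) * (x.2 - π j))))
      (nhdsWithin (σ i₀, π j₀)
        {x : ℂ × ℂ | (∀ i, x.1 ≠ σ i) ∧ (∀ j, x.2 ≠ π j)})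
      (nhds (h i₀ j₀)) := by
  have hlim := two_variable_barycentric_interpolation_general
    (fun _ hi => hσ.ne hi) (fun _ hj => hπ.ne hj) α β hα
  rw [hβ, mul_div_cancel_right₀ _ hα] at hlim
  exact hlim.mono_left (nhdsWithin_forall_ne_prod_le σ π i₀ j₀)
end

section
/- Let σ₁,…,σ_k and π₁,…,π_q be distinct complex numbers respectively, let h_{ij} ∈ ℂ and α_{ij} ∈ ℂ, and set β_{ij} = h_{ij}·α_{ij}. Fix an index i₀ and a point π̂ ∈ ℂ with π̂ ≠ π_j for all j, and suppose D := Σ_{j=1}^q α_{i₀j}/(π̂−π_j) ≠ 0. Then for any ĥ ∈ ℂ, the error ĥ − H̃(s,π̂) of the two-variable barycentric form H̃(s,p) = (Σ_{i,j} β_{ij}/((s−σ_i)(p−π_j))) / (Σ_{i,j} α_{ij}/((s−σ_i)(p−π_j))) tends to (Σ_{j=1}^q ((ĥ − h_{i₀j})·α_{i₀j})/(π̂−π_j)) / D as s tends to σ_{i₀} within the set of points s with s ≠ σ_i for all i. -/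
open Filter Topology

/-!
For fixed `p`, summing over `j` first turns the two-variable barycentric form into a one-variable
one with weights `∑ j, α i j / (p - π j)`. Multiplying its numerator and denominator by `s - σ i₀`
and letting `s → σ i₀` leaves only the `i₀`-th coefficient of each, so the form tends to the
average of the data on the grid line `s = σ i₀` with weights `α i₀ j / (p - π j)`.
-/

section Barycentric

variable {𝕜 ι κ : Type*} [Field 𝕜] [Fintype ι] [Fintype κ]

/-- The one-variable barycentric form with support points `σ`, numerator coefficients `b` and
denominator weights `a`. It is a formal quotient: at the support points it takes junk values, not
the interpolated ones. -/
def barycentricForm (σ b a : ι → 𝕜) (s : 𝕜) : 𝕜 :=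
  (∑ i, b i / (s - σ i)) / (∑ i, a i / (s - σ i))

/-- The two-variable barycentric form `H̃(s, p)` with support points `σ`, `π`, numerator
coefficients `β` and denominator weights `α`. As for `barycentricForm`, its values on the grid
lines `s = σ i` and `p = π j` are junk. -/
def twoVariableBarycentricForm (σ : ι → 𝕜) (π : κ → 𝕜) (β α : ι → κ → 𝕜) (s p : 𝕜) : 𝕜 :=
  (∑ i, ∑ j, β i j / ((s - σ i) * (p - π j))) / (∑ i, ∑ j, α i j / ((s - σ i) * (p - π j)))

theorem twoVariableBarycentricForm_eq_barycentricForm (σ : ι → 𝕜) (π : κ → 𝕜)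
    (β α : ι → κ → 𝕜) (s p : 𝕜) :
    twoVariableBarycentricForm σ π β α s p =
      barycentricForm σ (fun i => ∑ j, β i j / (p - π j)) (fun i => ∑ j, α i j / (p - π j)) s := by
  simp only [twoVariableBarycentricForm, barycentricForm, Finset.sum_div, div_div,
    mul_comm (s - σ _)]

theorem sub_sum_mul_div_sum {w : κ → 𝕜} (hw : ∑ j, w j ≠ 0) (x : κ → 𝕜) (c : 𝕜) :
    c - (∑ j, x j * w j) / ∑ j, w j = (∑ j, (c - x j) * w j) / ∑ j, w j := by
  simp only [sub_mul, Finset.sum_sub_distrib, ← Finset.mul_sum, sub_div, mul_div_cancel_right₀ c hw]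

variable [TopologicalSpace 𝕜] [IsTopologicalDivisionRing 𝕜]

theorem tendsto_sub_mul_sum_div_sub_s11 {σ : ι → 𝕜} {i₀ : ι} (hσ : ∀ i, i ≠ i₀ → σ i ≠ σ i₀)
    (a : ι → 𝕜) :
    Tendsto (fun s => (s - σ i₀) * ∑ i, a i / (s - σ i)) (𝓝[≠] σ i₀) (𝓝 (a i₀)) := by
  classical
  have regular_part : ContinuousAt (fun s => ∑ i ∈ {i₀}ᶜ, a i / (s - σ i)) (σ i₀) := by
    refine tendsto_finsetSum _ fun i hi => ?_
    have hne : σ i₀ - σ i ≠ 0 := sub_ne_zero.2 (hσ i (by simpa using hi)).symm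
    exact ContinuousAt.div (by fun_prop) (by fun_prop) hne
  have split_pole : ∀ s ≠ σ i₀, a i₀ + (s - σ i₀) * ∑ i ∈ {i₀}ᶜ, a i / (s - σ i) =
      (s - σ i₀) * ∑ i, a i / (s - σ i) := fun s hs => by
    rw [Fintype.sum_eq_add_sum_compl i₀, mul_add, mul_div_cancel₀ _ (sub_ne_zero.2 hs)]
  have limit : Tendsto (fun s => a i₀ + (s - σ i₀) * ∑ i ∈ {i₀}ᶜ, a i / (s - σ i))
      (𝓝 (σ i₀)) (𝓝 (a i₀)) := by
    simpa only [id, sub_self, zero_mul, add_zero] using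
      ((tendsto_id.sub_const (σ i₀)).mul regular_part.tendsto).const_add (a i₀)
  exact (limit.mono_left nhdsWithin_le_nhds).congr' (eventually_mem_nhdsWithin.mono split_pole)

theorem tendsto_barycentricForm {σ : ι → 𝕜} {i₀ : ι} (hσ : ∀ i, i ≠ i₀ → σ i ≠ σ i₀)
    (b : ι → 𝕜) {a : ι → 𝕜} (ha : a i₀ ≠ 0) :
    Tendsto (barycentricForm σ b a) (𝓝[≠] σ i₀) (𝓝 (b i₀ / a i₀)) := by
  refine ((tendsto_sub_mul_sum_div_sub_s11 hσ b).div (tendsto_sub_mul_sum_div_sub_s11 hσ a) ha).congr' ?_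
  filter_upwards [self_mem_nhdsWithin] with s hs
  exact mul_div_mul_left _ _ (sub_ne_zero.2 hs)

theorem two_variable_error_grid_line_limit_general {σ : ι → 𝕜} {π : κ → 𝕜} {i₀ : ι}
    (hσ : ∀ i, i ≠ i₀ → σ i ≠ σ i₀) {h : κ → 𝕜} {α β : ι → κ → 𝕜}
    (hβ : ∀ j, β i₀ j = h j * α i₀ j) {p : 𝕜} (hp : ∀ j, p ≠ π j)
    (hD : ∑ j, α i₀ j / (p - π j) ≠ 0) (c : 𝕜) :
    Tendsto (fun s => c - twoVariableBarycentricForm σ π β α s p) (𝓝[≠] σ i₀)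
      (𝓝 ((∑ j, ((c - h j) * α i₀ j) / (p - π j)) / ∑ j, α i₀ j / (p - π j))) := by
  have error_at_grid_line :
      c - (∑ j, β i₀ j / (p - π j)) / ∑ j, α i₀ j / (p - π j) =
        (∑ j, ((c - h j) * α i₀ j) / (p - π j)) / ∑ j, α i₀ j / (p - π j) := by
    simpa only [hβ, mul_div_assoc] using sub_sum_mul_div_sum hD h c
  simp only [twoVariableBarycentricForm_eq_barycentricForm, ← error_at_grid_line]
  exact (tendsto_barycentricForm hσ _ hD).const_sub c

end Barycentric

/-- With distinct support points `σ i`, `π j`, data `h i j`, weights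
`α i j`, and the interpolatory choice `β i j = h i j * α i j`, fix `i₀` and `π̂`
distinct from all `π j` with `D = ∑ j, α i₀ j/(π̂-π j) ≠ 0`. Then for any `ĥ`,
the error `ĥ - H̃(s, π̂)` tends to
`(∑ j, ((ĥ - h i₀ j) * α i₀ j)/(π̂-π j)) / D` as `s → σ i₀` within the points
distinct from all `σ i`. -/
theorem two_variable_error_grid_line_limit
    (k q : ℕ) (σ : Fin k → ℂ) (π : Fin q → ℂ)
    (hσ : Function.Injective σ) (hπ : Function.Injective π)
    (h α β : Fin k → Fin q → ℂ)
    (hβ : ∀ i j, β i j = h i j * α i j)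
    (i₀ : Fin k) (πhat : ℂ) (hπhat : ∀ j, πhat ≠ π j)
    (hD : (∑ j, α i₀ j / (πhat - π j)) ≠ 0) (hhat : ℂ) :
    Tendsto (fun s : ℂ =>
        hhat - (∑ i, ∑ j, β i j / ((s - σ i) * (πhat - π j))) /
          (∑ i, ∑ j, α i j / ((s - σ i) * (πhat - π j))))
      (nhdsWithin (σ i₀) {s : ℂ | ∀ i, s ≠ σ i})
      (nhds ((∑ j, ((hhat - h i₀ j) * α i₀ j) / (πhat - π j)) /
        (∑ j, α i₀ j / (πhat - π j)))) := by
  exact (two_variable_error_grid_line_limit_general (fun _ => hσ.ne) (hβ i₀) hπhat hD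
    hhat).mono_left (nhdsWithin_mono _ fun _ hs => hs i₀)
end

section
/- Let σ₁,…,σ_k, π₁,…,π_q, and ζ₁,…,ζ_o be three families of complex numbers, each family consisting of distinct points, let h_{ijℓ} ∈ ℂ be data values for 1 ≤ i ≤ k, 1 ≤ j ≤ q, 1 ≤ ℓ ≤ o, and let α_{ijℓ} ∈ ℂ with α_{i₀j₀ℓ₀} ≠ 0 for a fixed triple (i₀, j₀, ℓ₀). Set β_{ijℓ} = h_{ijℓ}·α_{ijℓ}, and define the three-variable barycentric form H̃(s,p,z) = (Σ_{i,j,ℓ} β_{ijℓ}/((s−σ_i)(p−π_j)(z−ζ_ℓ))) / (Σ_{i,j,ℓ} α_{ijℓ}/((s−σ_i)(p−π_j)(z−ζ_ℓ))). Then H̃(s,p,z) tends to h_{i₀j₀ℓ₀} as (s,p,z) tends to (σ_{i₀}, π_{j₀}, ζ_{ℓ₀}) within the set of triples (s,p,z) with s ≠ σ_i for all i, p ≠ π_j for all j, and z ≠ ζ_ℓ for all ℓ. That is, the three-variable barycentric form interpolates the data value h_{i₀j₀ℓ₀} at the support triple (σ_{i₀}, π_{j₀}, ζ_{ℓ₀}).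 -/
open Filter Topology

/-!
As `(s, p, z)` approaches the support triple, the kernel
`1 / ((s - σ i₀) * (p - π j₀) * (z - ζ l₀))` outgrows all the other kernels: this holds in each
variable separately and passes to products. Dividing numerator and denominator by it leaves
`β i₀ j₀ l₀` and `α i₀ j₀ l₀` in the limit.
-/

/-- The term `w i₀` of a family of functions dominates the family along `F`: it is eventually
nonzero and each other term is negligible against it. Negligibility is expressed by quotients
tending to zero, so that no norm is needed. -/
structure IsDominantTerm {X ι 𝕜 : Type*} [Field 𝕜] [TopologicalSpace 𝕜]
    (F : Filter X) (w : ι → X → 𝕜) (i₀ : ι) : Prop where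
  eventually_ne_zero : ∀ᶠ x in F, w i₀ x ≠ 0
  tendsto_div_zero : ∀ i ≠ i₀, Tendsto (fun x => w i x / w i₀ x) F (𝓝 0)

namespace IsDominantTerm

variable {X ι κ 𝕜 : Type*} [Field 𝕜] [TopologicalSpace 𝕜]
  {F : Filter X} {w : ι → X → 𝕜} {v : κ → X → 𝕜} {i₀ : ι} {j₀ : κ}

theorem tendsto_div [DecidableEq ι] (hw : IsDominantTerm F w i₀) (i : ι) :
    Tendsto (fun x => w i x / w i₀ x) F (𝓝 (if i = i₀ then 1 else 0)) := by
  split_ifs with hi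
  · subst hi
    exact tendsto_const_nhds.congr' (hw.eventually_ne_zero.mono fun x hx => (div_self hx).symm)
  · exact hw.tendsto_div_zero i hi

variable [IsTopologicalDivisionRing 𝕜]

theorem inv_sub {σ : ι → 𝕜} {u : X → 𝕜} (hσ : ∀ i ≠ i₀, σ i ≠ σ i₀)
    (hu : Tendsto u F (𝓝[≠] σ i₀)) :
    IsDominantTerm F (fun i x => (u x - σ i)⁻¹) i₀ where
  eventually_ne_zero :=
    (tendsto_nhdsWithin_iff.1 hu).2.mono fun _ hx => inv_ne_zero (sub_ne_zero.2 hx)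
  tendsto_div_zero i hi := by
    have hu' : Tendsto u F (𝓝 (σ i₀)) := tendsto_nhds_of_tendsto_nhdsWithin hu
    have hlim : Tendsto (fun x => (u x - σ i₀) / (u x - σ i)) F
        (𝓝 ((σ i₀ - σ i₀) / (σ i₀ - σ i))) :=
      (hu'.sub_const _).div (hu'.sub_const _) (sub_ne_zero.2 (hσ i hi).symm)
    simpa only [sub_self, zero_div, inv_div_inv] using hlim

theorem mul (hw : IsDominantTerm F w i₀) (hv : IsDominantTerm F v j₀) :
    IsDominantTerm F (fun (ij : ι × κ) x => w ij.1 x * v ij.2 x) (i₀, j₀) where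
  eventually_ne_zero := by
    filter_upwards [hw.eventually_ne_zero, hv.eventually_ne_zero] with x using mul_ne_zero
  tendsto_div_zero := by
    classical
    rintro ⟨i, j⟩ hij
    have hlim := (hw.tendsto_div i).mul (hv.tendsto_div j)
    rw [ite_zero_mul_ite_zero, if_neg (by rwa [← Prod.mk_inj])] at hlim
    simpa only [div_mul_div_comm] using hlim

theorem tendsto_sum_div [Fintype ι] (hw : IsDominantTerm F w i₀) (c : ι → 𝕜) :
    Tendsto (fun x => (∑ i, c i * w i x) / w i₀ x) F (𝓝 (c i₀)) := by
  classical
  have hlim := tendsto_finsetSum Finset.univ fun i _ => (hw.tendsto_div i).const_mul (c i)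
  simpa only [mul_ite, mul_one, mul_zero, Finset.sum_ite_eq', Finset.mem_univ, if_true,
    ← mul_div_assoc, ← Finset.sum_div] using hlim

theorem tendsto_sum_div_sum [Fintype ι] (hw : IsDominantTerm F w i₀) {a : ι → 𝕜} (b : ι → 𝕜)
    (ha : a i₀ ≠ 0) :
    Tendsto (fun x => (∑ i, b i * w i x) / ∑ i, a i * w i x) F (𝓝 (b i₀ / a i₀)) :=
  ((hw.tendsto_sum_div b).div (hw.tendsto_sum_div a) ha).congr' <|
    hw.eventually_ne_zero.mono fun _ hx => div_div_div_cancel_right₀ hx _ _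

end IsDominantTerm

theorem three_variable_barycentric_interpolation_general
    {𝕜 ι κ μ : Type*} [Field 𝕜] [TopologicalSpace 𝕜] [IsTopologicalDivisionRing 𝕜]
    [Fintype ι] [Fintype κ] [Fintype μ] {σ : ι → 𝕜} {π : κ → 𝕜} {ζ : μ → 𝕜}
    {i₀ : ι} {j₀ : κ} {l₀ : μ} (hσ : ∀ i ≠ i₀, σ i ≠ σ i₀) (hπ : ∀ j ≠ j₀, π j ≠ π j₀)
    (hζ : ∀ l ≠ l₀, ζ l ≠ ζ l₀) {α : ι → κ → μ → 𝕜} (β : ι → κ → μ → 𝕜) (hα : α i₀ j₀ l₀ ≠ 0) :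
    Tendsto (fun x : 𝕜 × 𝕜 × 𝕜 =>
        (∑ i, ∑ j, ∑ l, β i j l / ((x.1 - σ i) * (x.2.1 - π j) * (x.2.2 - ζ l))) /
        (∑ i, ∑ j, ∑ l, α i j l / ((x.1 - σ i) * (x.2.1 - π j) * (x.2.2 - ζ l))))
      (𝓝[{σ i₀}ᶜ ×ˢ {π j₀}ᶜ ×ˢ {ζ l₀}ᶜ] (σ i₀, π j₀, ζ l₀))
      (𝓝 (β i₀ j₀ l₀ / α i₀ j₀ l₀)) := by
  simp only [nhdsWithin_prod_eq]
  set F := 𝓝[≠] σ i₀ ×ˢ 𝓝[≠] π j₀ ×ˢ 𝓝[≠] ζ l₀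
  have hs : Tendsto (fun x => x.1) F (𝓝[≠] σ i₀) := tendsto_fst
  have hp : Tendsto (fun x => x.2.1) F (𝓝[≠] π j₀) := tendsto_fst.comp tendsto_snd
  have hz : Tendsto (fun x => x.2.2) F (𝓝[≠] ζ l₀) := tendsto_snd.comp tendsto_snd
  have hdom := ((IsDominantTerm.inv_sub hσ hs).mul (.inv_sub hπ hp)).mul (.inv_sub hζ hz)
  have hlim := hdom.tendsto_sum_div_sum
    (a := fun ijl => α ijl.1.1 ijl.1.2 ijl.2) (fun ijl => β ijl.1.1 ijl.1.2 ijl.2) hα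
  simpa only [Fintype.sum_prod_type, div_eq_mul_inv, mul_inv] using hlim

/-- With three families of distinct support points `σ i`, `π j`,
`ζ ℓ`, data `h i j ℓ`, weights `α i j ℓ` with `α i₀ j₀ ℓ₀ ≠ 0`, and the
interpolatory choice `β i j ℓ = h i j ℓ * α i j ℓ`, the three-variable
barycentric form tends to `h i₀ j₀ ℓ₀` as `(s,p,z) → (σ i₀, π j₀, ζ ℓ₀)` within
the triples avoiding all support points; i.e. it interpolates the data at the
support triple. -/
theorem three_variable_barycentric_interpolation
    (k q o : ℕ) (σ : Fin k → ℂ) (π : Fin q → ℂ) (ζ : Fin o → ℂ)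
    (hσ : Function.Injective σ) (hπ : Function.Injective π)
    (hζ : Function.Injective ζ)
    (h α β : Fin k → Fin q → Fin o → ℂ)
    (hβ : ∀ i j l, β i j l = h i j l * α i j l)
    (i₀ : Fin k) (j₀ : Fin q) (l₀ : Fin o) (hα : α i₀ j₀ l₀ ≠ 0) :
    Tendsto (fun x : ℂ × ℂ × ℂ =>
        (∑ i, ∑ j, ∑ l, β i j l /
            ((x.1 - σ i) * (x.2.1 - π j) * (x.2.2 - ζ l))) /
        (∑ i, ∑ j, ∑ l, α i j l /
            ((x.1 - σ i) * (x.2.1 - π j) * (x.2.2 - ζ l))))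
      (nhdsWithin (σ i₀, π j₀, ζ l₀)
        {x : ℂ × ℂ × ℂ |
          (∀ i, x.1 ≠ σ i) ∧ (∀ j, x.2.1 ≠ π j) ∧ (∀ l, x.2.2 ≠ ζ l)})
      (nhds (h i₀ j₀ l₀)) := by
  rw [eq_div_of_mul_eq hα (hβ i₀ j₀ l₀).symm]
  exact (three_variable_barycentric_interpolation_general (fun _ => hσ.ne) (fun _ => hπ.ne)
    (fun _ => hζ.ne) β hα).mono_left <| nhdsWithin_mono _ fun _ hx =>
      ⟨hx.1 i₀, hx.2.1 j₀, hx.2.2 l₀⟩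
end
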